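/- arXiv:1612.07227 — 2 statements merged into one kernel-verified Lean document; each statement's English description precedes it below -/
import Mathlib

section
/- Let G be a group generated by a finite set S and let 𝓗 = {H_1,…,H_l} be a finite collection of stable subgroups of G. Then 𝓗 has finite height: there exists n ∈ ℕ such that the intersection of any n+1 essentially distinct conjugates of subgroups from 𝓗 is finite. -/
open Pointwise

section BasicDefs

variable {G : Type*} [Group G]

/-- The word length of `g` with respect to the generating set `S`
(words use letters from `S ∪ S⁻¹`). -/
noncomputable def wordLength (S : Set G) (g : G) : ℕ :=
  sInf {n : ℕ | ∃ l : List G, l.length = n ∧ (∀ x ∈ l, x ∈ S ∨ x⁻¹ ∈ S) ∧ l.prod = g}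

/-- The word metric on `G` with respect to the generating set `S`. -/
noncomputable def wordDist (S : Set G) (g h : G) : ℝ :=
  (wordLength S (g⁻¹ * h) : ℝ)

/-- The closed `r`-neighborhood of a subset `A` with respect to the word metric `d_S`. -/
def nbhd (S : Set G) (r : ℝ) (A : Set G) : Set G :=
  {g : G | ∃ a ∈ A, wordDist S g a ≤ r}

/-- The distance between two subsets: the infimum of distances between their elements. -/
noncomputable def setDist (S : Set G) (A B : Set G) : ℝ :=
  sInf {r : ℝ | ∃ a ∈ A, ∃ b ∈ B, r = wordDist S a b}

/-- The conjugate subgroup `H^g = g H g⁻¹`. -/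
def conjSub (g : G) (H : Subgroup G) : Subgroup G :=
  H.map (MulAut.conj g).toMonoidHom

end BasicDefs

/-- `γ` restricted to `{0, …, n}` is a `(K, ε)`-quasigeodesic for the distance function `d`. -/
def IsQuasigeodesic {α : Type*} (d : α → α → ℝ) (K ε : ℝ) (n : ℕ) (γ : ℕ → α) : Prop :=
  ∀ i j : ℕ, i ≤ n → j ≤ n →
    (1 / K) * |(i : ℝ) - (j : ℝ)| - ε ≤ d (γ i) (γ j) ∧
      d (γ i) (γ j) ≤ K * |(i : ℝ) - (j : ℝ)| + ε

/-- `γ` restricted to `{0, …, n}` is a geodesic for the distance function `d`. -/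
def IsGeodesic {α : Type*} (d : α → α → ℝ) (n : ℕ) (γ : ℕ → α) : Prop :=
  ∀ i j : ℕ, i ≤ n → j ≤ n → d (γ i) (γ j) = |(i : ℝ) - (j : ℝ)|

/-- The path `γ` (on `{0, …, n}`) is `f`-stable: every `(K, ε)`-quasigeodesic with endpoints
on `γ` stays in the `f K ε`-neighborhood of `γ`. -/
def IsStablePath {α : Type*} (d : α → α → ℝ) (f : ℝ → ℝ → ℝ) (n : ℕ) (γ : ℕ → α) : Prop :=
  ∀ K ε : ℝ, 1 ≤ K → 0 ≤ ε → ∀ (m : ℕ) (η : ℕ → α),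
    IsQuasigeodesic d K ε m η →
    (∃ i ≤ n, η 0 = γ i) → (∃ i ≤ n, η m = γ i) →
    ∀ j ≤ m, ∃ i ≤ n, d (η j) (γ i) ≤ f K ε

/-- The Gromov product `⟨x, y⟩_w` with respect to a distance function `d`. -/
noncomputable def gromovProd {α : Type*} (d : α → α → ℝ) (w x y : α) : ℝ :=
  (d w x + d w y - d x y) / 2

/-- Gromov hyperbolicity of a distance function, via the four-point condition. -/
def IsHyperbolicDist {α : Type*} (d : α → α → ℝ) : Prop :=
  ∃ δ : ℝ, 0 ≤ δ ∧ ∀ w x y z : α,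
    min (gromovProd d w x y) (gromovProd d w y z) - δ ≤ gromovProd d w x z

section GroupDefs

variable {G : Type*} [Group G]

/-- `H` is a stable subgroup of `(G, d_S)` with stability function `f`: `H` has a finite
generating set `T` such that the inclusion `(H, d_T) → (G, d_S)` is a quasi-isometric
embedding sending every `d_T`-geodesic to an `f`-stable quasigeodesic of `(G, d_S)`. -/
def IsStableSubgroupWith (S : Set G) (H : Subgroup G) (f : ℝ → ℝ → ℝ) : Prop :=
  ∃ T : Set H, T.Finite ∧ Subgroup.closure T = ⊤ ∧
    (∃ μ c : ℝ, 1 ≤ μ ∧ 0 ≤ c ∧ ∀ h₁ h₂ : H,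
      (1 / μ) * wordDist T h₁ h₂ - c ≤ wordDist S (h₁ : G) (h₂ : G) ∧
        wordDist S (h₁ : G) (h₂ : G) ≤ μ * wordDist T h₁ h₂ + c) ∧
    ∀ (n : ℕ) (γ : ℕ → H), IsGeodesic (wordDist T) n γ →
      (∃ K ε : ℝ, 1 ≤ K ∧ 0 ≤ ε ∧
        IsQuasigeodesic (wordDist S) K ε n (fun i => (γ i : G))) ∧
      IsStablePath (wordDist S) f n (fun i => (γ i : G))

/-- `H` is a stable subgroup of `(G, d_S)`. -/
def IsStableSubgroup (S : Set G) (H : Subgroup G) : Prop :=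
  ∃ f : ℝ → ℝ → ℝ, IsStableSubgroupWith S H f

/-- The family `Q` of subgroups is hyperbolically embedded in `(G, X)`:
(Q1) geometric separation, (Q2) finite generation, (Q3) uniform quasi-isometric embedding. -/
def IsHypEmbFamily {G : Type*} [Group G] {ι : Type*} (X : Set G) (Q : ι → Subgroup G) : Prop :=
  (∀ ε : ℝ, 0 < ε → ∃ R : ℝ, ∀ (g : G) (i j : ι),
      (∃ a ∈ (Q i : Set G) ∩ nbhd X ε (g • (Q j : Set G)),
        ∃ b ∈ (Q i : Set G) ∩ nbhd X ε (g • (Q j : Set G)), R ≤ wordDist X a b) →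
      i = j ∧ g ∈ Q i) ∧
  ∃ Y : ι → Set G, (∀ i, (Y i).Finite ∧ Y i ⊆ (Q i : Set G) ∧ Subgroup.closure (Y i) = Q i) ∧
    ∃ μ c : ℝ, 1 ≤ μ ∧ 0 ≤ c ∧ ∀ i : ι, ∀ h ∈ Q i,
      (wordLength (Y i) h : ℝ) ≤ μ * (wordLength X h : ℝ) + c

/-- The subset `H` of `G` satisfies the WPD condition in `(G, X)`. -/
def WPDSet (X : Set G) (H : Set G) : Prop :=
  ∀ ε : ℝ, 0 < ε → ∃ N : ℝ, 0 < N ∧ ∀ h₁ h₂ : G, h₁ ∈ H → h₂ ∈ H →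
    N < wordDist X h₁ h₂ →
    {g : G | wordDist X h₁ (g * h₁) < ε ∧ wordDist X h₂ (g * h₂) < ε}.Finite

/-- A quasimorphism on `G`. -/
def IsQuasimorphism (q : G → ℝ) : Prop :=
  ∃ D : ℝ, 0 ≤ D ∧ ∀ x y : G, |q (x * y) - q x - q y| ≤ D

/-- A homogeneous quasimorphism on `G`. -/
def IsHomogeneousQM (q : G → ℝ) : Prop :=
  IsQuasimorphism q ∧ ∀ (x : G) (n : ℕ), q (x ^ n) = (n : ℝ) * q x

/-- `H` is a quasiconvex subgroup of `(G, d_S)`: every geodesic with endpoints in `H`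
lies in a uniformly bounded neighborhood of `H`. -/
def IsQuasiconvex (S : Set G) (H : Subgroup G) : Prop :=
  ∃ C : ℝ, 0 ≤ C ∧ ∀ (n : ℕ) (γ : ℕ → G), IsGeodesic (wordDist S) n γ →
    γ 0 ∈ H → γ n ∈ H → ∀ i ≤ n, ∃ h ∈ H, wordDist S (γ i) h ≤ C

end GroupDefs

section Helpers

variable {G : Type*} [Group G]

lemma wl_exists (S : Set G) (hS : Subgroup.closure S = ⊤) (g : G) :
    ∃ l : List G, l.length = wordLength S g ∧ (∀ x ∈ l, x ∈ S ∨ x⁻¹ ∈ S) ∧ l.prod = g := by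
  have hne : {n : ℕ | ∃ l : List G, l.length = n ∧ (∀ x ∈ l, x ∈ S ∨ x⁻¹ ∈ S) ∧
      l.prod = g}.Nonempty := by
    have hg : g ∈ (Subgroup.closure S).toSubmonoid := by rw [hS]; trivial
    rw [Subgroup.closure_toSubmonoid] at hg
    obtain ⟨l, hl, hp⟩ := Submonoid.exists_list_of_mem_closure hg
    exact ⟨l.length, l, rfl, fun x hx => by simpa using hl x hx, hp⟩
  exact Nat.sInf_mem hne

lemma wl_le (S : Set G) (l : List G) (hl : ∀ x ∈ l, x ∈ S ∨ x⁻¹ ∈ S) :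
    wordLength S l.prod ≤ l.length :=
  Nat.sInf_le ⟨l, rfl, hl, rfl⟩

lemma wl_mul (S : Set G) (hS : Subgroup.closure S = ⊤) (g h : G) :
    wordLength S (g * h) ≤ wordLength S g + wordLength S h := by
  obtain ⟨l, h1, h2, h3⟩ := wl_exists S hS g
  obtain ⟨l', h1', h2', h3'⟩ := wl_exists S hS h
  have := wl_le S (l ++ l') (by
    intro x hx
    rcases List.mem_append.1 hx with hx | hx
    · exact h2 x hx
    · exact h2' x hx)
  rw [List.prod_append, h3, h3', List.length_append] at this
  omega

lemma wl_inv_le (S : Set G) (hS : Subgroup.closure S = ⊤) (g : G) :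
    wordLength S g⁻¹ ≤ wordLength S g := by
  obtain ⟨l, h1, h2, h3⟩ := wl_exists S hS g
  have := wl_le S (l.map (fun x => x⁻¹)).reverse (by
    intro x hx
    simp only [List.mem_reverse, List.mem_map] at hx
    obtain ⟨y, hy, rfl⟩ := hx
    rw [inv_inv]
    exact (h2 y hy).symm)
  rw [← List.prod_inv_reverse, h3] at this
  simpa [h1] using this

lemma wl_inv (S : Set G) (hS : Subgroup.closure S = ⊤) (g : G) :
    wordLength S g⁻¹ = wordLength S g := by
  apply le_antisymm (wl_inv_le S hS g)
  simpa using wl_inv_le S hS g⁻¹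

lemma wl_ball_finite (S : Set G) (hfin : S.Finite) (hS : Subgroup.closure S = ⊤) (N : ℕ) :
    {g : G | wordLength S g ≤ N}.Finite := by
  induction N with
  | zero =>
    apply (Set.finite_singleton (1 : G)).subset
    intro g hg
    obtain ⟨l, h1, h2, h3⟩ := wl_exists S hS g
    have h0 : wordLength S g = 0 := Nat.le_zero.1 hg
    rw [h0] at h1
    rw [List.length_eq_zero_iff.1 h1] at h3
    simpa using h3.symm
  | succ N ih =>
    have hS' : ((S ∪ S⁻¹) ∪ {1}).Finite := (hfin.union hfin.inv).union (Set.finite_singleton _)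
    apply (hS'.mul ih).subset
    intro g hg
    obtain ⟨l, h1, h2, h3⟩ := wl_exists S hS g
    have hg' : wordLength S g ≤ N + 1 := hg
    cases l with
    | nil =>
      refine Set.mem_mul.2 ⟨1, by simp, g, ?_, by simp⟩
      simp at h1
      show wordLength S g ≤ N
      omega
    | cons x l =>
      refine Set.mem_mul.2 ⟨x, ?_, l.prod, ?_, by simpa using h3⟩
      · have := h2 x (by simp)
        simpa using Or.inr this
      · have := wl_le S l (fun y hy => h2 y (by simp [hy]))
        simp at h1
        show wordLength S l.prod ≤ N
        omega

/-- natural-number valued word distance -/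
noncomputable def nd (S : Set G) (x y : G) : ℕ := wordLength S (x⁻¹ * y)

lemma nd_comm (S : Set G) (hS : Subgroup.closure S = ⊤) (x y : G) : nd S x y = nd S y x := by
  unfold nd
  rw [← wl_inv S hS]
  simp

lemma nd_tri (S : Set G) (hS : Subgroup.closure S = ⊤) (x y z : G) :
    nd S x z ≤ nd S x y + nd S y z := by
  unfold nd
  have := wl_mul S hS (x⁻¹ * y) (y⁻¹ * z)
  simpa [mul_assoc] using this

lemma nd_mul (S : Set G) (g x y : G) : nd S (g * x) (g * y) = nd S x y := by
  unfold nd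
  simp [mul_assoc]

lemma exists_geod (S : Set G) (hS : Subgroup.closure S = ⊤) (x y : G) :
    ∃ γ : ℕ → G, γ 0 = x ∧ γ (nd S x y) = y ∧
      ∀ i j : ℕ, i ≤ j → j ≤ nd S x y → nd S (γ i) (γ j) = j - i := by
  obtain ⟨l, h1, h2, h3⟩ := wl_exists S hS (x⁻¹ * y)
  change l.length = nd S x y at h1
  have hle : ∀ i j : ℕ, i ≤ j → nd S (x * (l.take i).prod) (x * (l.take j).prod) ≤ j - i := by
    intro i j hij
    have e : (l.take i) ++ ((l.take j).drop i) = l.take j := by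
      have := List.take_append_drop i (l.take j)
      rwa [List.take_take, min_eq_left hij] at this
    rw [nd_mul, ← e, List.prod_append]
    unfold nd
    rw [inv_mul_cancel_left]
    have := wl_le S ((l.take j).drop i)
      (fun z hz => h2 z (List.mem_of_mem_take (List.mem_of_mem_drop hz)))
    refine this.trans ?_
    rw [List.length_drop, List.length_take]
    omega
  have hend : x * (l.take (nd S x y)).prod = y := by
    rw [← h1, List.take_length, h3]; simp
  refine ⟨fun i => x * (l.take i).prod, by simp, hend, ?_⟩
  intro i j hij hj
  have a1 := hle 0 i (by omega)
  have a2 := hle i j hij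
  have a3 := hle j _ hj
  rw [hend] at a3
  have t1 := nd_tri S hS x (x * (l.take i).prod) y
  have t2 := nd_tri S hS (x * (l.take i).prod) (x * (l.take j).prod) y
  have e0 : x * (l.take 0).prod = x := by simp
  rw [e0] at a1
  show nd S (x * (l.take i).prod) (x * (l.take j).prod) = j - i
  omega

/-- the detour path is a `(3,0)`-quasigeodesic -/
lemma detour {X : Type*} (d : X → X → ℕ) (hc : ∀ x y, d x y = d y x)
    (ht : ∀ x y z, d x z ≤ d x y + d y z)
    (hg : ∀ x y, ∃ γ : ℕ → X, γ 0 = x ∧ γ (d x y) = y ∧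
      ∀ i j : ℕ, i ≤ j → j ≤ d x y → d (γ i) (γ j) = j - i)
    (N D : ℕ) (α : ℕ → X) (hα : ∀ i j : ℕ, i ≤ j → j ≤ N → d (α i) (α j) = j - i)
    (x y : X) (hx : d x (α 0) ≤ D) (hy : d y (α N) ≤ D) (hN : 8 * D ≤ N) :
    ∃ (m : ℕ) (η : ℕ → X), η 0 = x ∧ η m = y ∧ (∃ j ≤ m, η j = α (2 * D)) ∧
      ∀ i j : ℕ, i ≤ j → j ≤ m → d (η i) (η j) ≤ j - i ∧ j - i ≤ 3 * d (η i) (η j) := by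
  obtain ⟨s, hs, hsmin⟩ := Finset.exists_min_image (Finset.range (N + 1)) (fun i => d x (α i))
    ⟨0, by simp⟩
  obtain ⟨t, htN, htmin⟩ := Finset.exists_min_image (Finset.range (N + 1)) (fun i => d y (α i))
    ⟨0, by simp⟩
  simp only [Finset.mem_range] at hs hsmin htN htmin
  have s0 := hsmin 0 (by omega)
  have t0 := htmin N (by omega)
  have s1 : s ≤ 2 * D := by
    have := ht (α 0) x (α s)
    have := hα 0 s (by omega) (by omega)
    have := hc (α 0) x
    omega
  have t1 : N ≤ t + 2 * D := by
    have := ht (α t) y (α N)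
    have := hα t N (by omega) (by omega)
    have := hc (α t) y
    omega
  obtain ⟨β, b0, b1, hβ⟩ := hg x (α s)
  obtain ⟨δ, c0, c1, hδ⟩ := hg (α t) y
  have hc2 := hc (α t) y
  set p := d x (α s) with hp
  set q := d (α t) y with hq
  -- distance from β i to α u
  have lowβ : ∀ i ≤ p, ∀ u ≤ N, p - i ≤ d (β i) (α u) := by
    intro i hi u hu
    have h1 := hsmin u (by omega)
    have h2 := ht x (β i) (α u)
    have h3 := hβ 0 i (by omega) hi
    rw [b0] at h3
    omega
  have lowδ : ∀ i ≤ q, ∀ u ≤ N, i ≤ d (α u) (δ i) := by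
    intro i hi u hu
    have h1 := htmin u (by omega)
    have h2 := ht (α u) (δ i) y
    have h3 := hδ i q hi le_rfl
    rw [c1] at h3
    have h4 := hc (α u) y
    omega
  have hst : s ≤ t := by omega
  obtain ⟨η, E1, E2, E3⟩ : ∃ η : ℕ → X, (∀ i ≤ p, η i = β i) ∧
      (∀ u, u ≤ t - s → η (p + u) = α (s + u)) ∧ (∀ v, η (p + (t - s) + v) = δ v) := by
    refine ⟨fun i => if i ≤ p then β i else if i ≤ p + (t - s) then α (s + (i - p))
      else δ (i - p - (t - s)), ?_, ?_, ?_⟩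
    · intro i hi; simp [hi]
    · intro u hu
      by_cases h0 : u = 0
      · subst h0; simp [b1]
      · have h1 : ¬ (p + u ≤ p) := by omega
        have h2 : p + u ≤ p + (t - s) := by omega
        simp only [h1, h2, if_false, if_true]
        congr 2; omega
    · intro v
      by_cases h0 : v = 0
      · subst h0
        by_cases h1 : t = s
        · subst h1; simp [b1, c0]
        · have h1 : ¬ (p + (t - s) + 0 ≤ p) := by omega
          have h2 : p + (t - s) + 0 ≤ p + (t - s) := by omega
          simp only [h1, h2, if_false, if_true]
          rw [c0]; congr 1; omega
      · have h1 : ¬ (p + (t - s) + v ≤ p) := by omega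
        have h2 : ¬ (p + (t - s) + v ≤ p + (t - s)) := by omega
        simp only [h1, h2, if_false]
        congr 1; omega
  refine ⟨p + (t - s) + q, η, by rw [E1 0 (by omega), b0], by rw [E3, c1],
    ⟨p + (2 * D - s), by omega, ?_⟩, ?_⟩
  · rw [E2 _ (by omega)]; congr 1; omega
  · intro i j hij hj
    have cases3 : ∀ i, i ≤ p + (t - s) + q → i ≤ p ∨ (∃ u, u ≤ t - s ∧ i = p + u) ∨
        (∃ v, v ≤ q ∧ i = p + (t - s) + v) := by
      intro i hi
      by_cases h1 : i ≤ p
      · exact Or.inl h1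
      · by_cases h2 : i ≤ p + (t - s)
        · exact Or.inr (Or.inl ⟨i - p, by omega, by omega⟩)
        · exact Or.inr (Or.inr ⟨i - p - (t - s), by omega, by omega⟩)
    have hβe : ∀ i ≤ p, d (β i) (α s) = p - i := by
      intro i hi
      have := hβ i p hi le_rfl
      rwa [b1] at this
    have hδe : ∀ v ≤ q, d (α t) (δ v) = v := by
      intro v hv
      have := hδ 0 v (by omega) hv
      rw [c0] at this
      omega
    rcases cases3 i (by omega) with hi | ⟨u, hu, rfl⟩ | ⟨v, hv, rfl⟩
    · rw [E1 i hi]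
      rcases cases3 j (by omega) with hj' | ⟨u, hu, rfl⟩ | ⟨v, hv, rfl⟩
      · rw [E1 j hj', hβ i j hij hj']
        omega
      · rw [E2 u hu]
        have h1 := hβe i hi
        have h2 := hα s (s + u) (by omega) (by omega)
        have h3 := lowβ i hi (s + u) (by omega)
        have h4 := ht (β i) (α s) (α (s + u))
        have h5 := ht (α s) (β i) (α (s + u))
        have h6 := hc (α s) (β i)
        omega
      · rw [E3 v]
        have h1 := hβe i hi
        have h2 := hα s t (by omega) (by omega)
        have h3 := hδe v hv
        have h4 := ht (β i) (α s) (δ v)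
        have h5 := ht (α s) (α t) (δ v)
        have h6 := ht (α s) (β i) (α t)
        have h7 := ht (β i) (δ v) (α t)
        have h8 := hc (α s) (β i)
        have h9 := hc (δ v) (α t)
        omega
    · rw [E2 u hu]
      rcases cases3 j (by omega) with hj' | ⟨u', hu', rfl⟩ | ⟨v, hv, rfl⟩
      · have hu0 : u = 0 := by omega
        have hj0 : j = p := by omega
        subst hu0
        rw [E1 j hj', hj0, b1]
        have := hα s s le_rfl (by omega)
        simp only [Nat.add_zero]
        omega
      · rw [E2 u' hu', hα (s + u) (s + u') (by omega) (by omega)]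
        omega
      · rw [E3 v]
        have h1 := hδe v hv
        have h2 := hα (s + u) t (by omega) (by omega)
        have h3 := lowδ v hv (s + u) (by omega)
        have h4 := ht (α (s + u)) (α t) (δ v)
        have h5 := ht (α (s + u)) (δ v) (α t)
        have h6 := hc (δ v) (α t)
        omega
    · obtain ⟨w, hw⟩ : ∃ w, j = p + (t - s) + w := ⟨j - p - (t - s), by omega⟩
      subst hw
      rw [E3, E3, hδ v w (by omega) (by omega)]
      omega

/-- uniform closeness: a point far along a geodesic from `1` to `a` is close to the coset. -/
lemma coset_close (S : Set G) (hS : Subgroup.closure S = ⊤) (H : Subgroup G) (f : ℝ → ℝ → ℝ)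
    (hH : IsStableSubgroupWith S H f) (N D : ℕ) (α : ℕ → G)
    (hα : ∀ i j : ℕ, i ≤ j → j ≤ N → nd S (α i) (α j) = j - i)
    (g : G) (h : H) (hx : nd S g (α 0) ≤ D) (hy : nd S (g * h) (α N) ≤ D) (hN : 8 * D ≤ N) :
    ∃ h' : H, wordDist S (α (2 * D)) (g * h') ≤ f 3 0 := by
  obtain ⟨T, -, hT, -, hgeo⟩ := hH
  obtain ⟨γ, g0, g1, hγ⟩ := exists_geod T hT 1 h
  have hγ' : IsGeodesic (wordDist T) (nd T 1 h) γ := by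
    intro i j hi hj
    rcases le_total i j with hij | hij
    · have := hγ i j hij hj
      change ((nd T (γ i) (γ j) : ℕ) : ℝ) = _
      rw [this, Nat.cast_sub hij, abs_sub_comm, abs_of_nonneg]
      have : (i : ℝ) ≤ j := by exact_mod_cast hij
      linarith
    · have := hγ j i hij hi
      change ((nd T (γ i) (γ j) : ℕ) : ℝ) = _
      rw [nd_comm T hT, this, Nat.cast_sub hij, abs_of_nonneg]
      have : (j : ℝ) ≤ i := by exact_mod_cast hij
      linarith
  obtain ⟨m, η, e0, e1, ⟨j, hj, ej⟩, hη⟩ := detour (nd S) (nd_comm S hS) (nd_tri S hS)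
    (exists_geod S hS) N D α hα g (g * h) hx hy hN
  have key : ∀ i j : ℕ, i ≤ j → j ≤ m →
      (1 / 3) * |(i : ℝ) - (j : ℝ)| - 0 ≤ (nd S (η i) (η j) : ℝ) ∧
      (nd S (η i) (η j) : ℝ) ≤ 3 * |(i : ℝ) - (j : ℝ)| + 0 := by
    intro i j hij hjm
    obtain ⟨h1, h2⟩ := hη i j hij hjm
    have h1' : ((nd S (η i) (η j) : ℕ) : ℝ) ≤ ((j - i : ℕ) : ℝ) := by exact_mod_cast h1
    have h2' : ((j - i : ℕ) : ℝ) ≤ 3 * ((nd S (η i) (η j) : ℕ) : ℝ) := by exact_mod_cast h2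
    rw [Nat.cast_sub hij] at h1' h2'
    have : (i : ℝ) ≤ j := by exact_mod_cast hij
    rw [abs_sub_comm, abs_of_nonneg (by linarith)]
    constructor <;> linarith
  obtain ⟨i, hi, hd⟩ := (hgeo _ γ hγ').2 3 0 (by norm_num) le_rfl m (fun i => g⁻¹ * η i) (by
      intro i j hi hj
      change _ ≤ ((nd S (g⁻¹ * η i) (g⁻¹ * η j) : ℕ) : ℝ) ∧
        ((nd S (g⁻¹ * η i) (g⁻¹ * η j) : ℕ) : ℝ) ≤ _
      rw [nd_mul]
      rcases le_total i j with hij | hij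
      · exact key i j hij hj
      · rw [nd_comm S hS, abs_sub_comm]
        exact key j i hij hi)
    ⟨0, by omega, by simp [e0, g0]⟩ ⟨_, le_rfl, by simp [e1, g1]⟩ j hj
  refine ⟨γ i, ?_⟩
  change ((nd S (α (2 * D)) (g * γ i) : ℕ) : ℝ) ≤ _
  change ((nd S (g⁻¹ * η j) (γ i) : ℕ) : ℝ) ≤ _ at hd
  rw [← nd_mul S g, mul_inv_cancel_left, ej] at hd
  exact hd

end Helpers

/-- **Finite height.** A finite collection of stable subgroups of a finitely generated
group has finite height: there is `n` such that the intersection of any `n + 1`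
essentially distinct conjugates is finite. -/
theorem finite_height_of_stable {G : Type*} [Group G] (S : Set G) (hSfin : S.Finite)
    (hSgen : Subgroup.closure S = ⊤) (l : ℕ) (H : Fin l → Subgroup G)
    (hstable : ∀ i, IsStableSubgroup S (H i)) :
    ∃ n : ℕ, ∀ (k : ℕ) (σ : Fin k → Fin l) (g : Fin k → G),
      (∀ i j : Fin k, i ≠ j → g i • (H (σ i) : Set G) ≠ g j • (H (σ j) : Set G)) →
      n + 1 ≤ k →
      (⋂ i : Fin k, (conjSub (g i) (H (σ i)) : Set G)).Finite := by
  choose f hf using hstable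
  obtain ⟨R, hR⟩ : ∃ R : ℕ, ∀ i, f i 3 0 ≤ R := by
    refine ⟨Finset.univ.sup (fun i => ⌈f i 3 0⌉₊), fun i => ?_⟩
    refine (Nat.le_ceil _).trans ?_
    exact_mod_cast Finset.le_sup (f := fun i => ⌈f i 3 0⌉₊) (Finset.mem_univ i)
  have hB := wl_ball_finite S hSfin hSgen R
  refine ⟨l * hB.toFinset.card, fun k σ g hdist hk => ?_⟩
  by_contra hinf
  obtain ⟨D, hD⟩ : ∃ D : ℕ, ∀ i, wordLength S (g i) ≤ D :=
    ⟨Finset.univ.sup (fun i => wordLength S (g i)), fun i =>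
      Finset.le_sup (f := fun i => wordLength S (g i)) (Finset.mem_univ i)⟩
  obtain ⟨a, haA, haN⟩ : ∃ a ∈ (⋂ i : Fin k, (conjSub (g i) (H (σ i)) : Set G)),
      8 * D ≤ wordLength S a := by
    by_contra hcon
    push Not at hcon
    exact hinf ((wl_ball_finite S hSfin hSgen (8 * D)).subset fun a ha => (hcon a ha).le)
  obtain ⟨α, α0, α1, hα⟩ := exists_geod S hSgen 1 a
  have hnd : nd S 1 a = wordLength S a := by simp [nd]
  have hclose : ∀ i : Fin k, ∃ h : H (σ i), wordDist S (α (2 * D)) (g i * h) ≤ f (σ i) 3 0 := by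
    intro i
    have hai : a ∈ (conjSub (g i) (H (σ i)) : Set G) := Set.mem_iInter.1 haA i
    obtain ⟨h, hh, hha⟩ := hai
    have hha' : g i * h = a * g i := by
      rw [← hha]; simp
    refine coset_close S hSgen (H (σ i)) (f (σ i)) (hf (σ i)) (nd S 1 a) D α hα (g i) ⟨h, hh⟩
      ?_ ?_ (by omega)
    · rw [α0, nd_comm S hSgen]
      simpa [nd] using hD i
    · rw [α1]
      change nd S (g i * h) a ≤ D
      rw [hha', nd_comm S hSgen]
      simpa [nd] using hD i
  choose h hh using hclose
  have hmem : ∀ i, (σ i, (α (2 * D))⁻¹ * (g i * (h i : G))) ∈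
      (Finset.univ : Finset (Fin l)) ×ˢ hB.toFinset := by
    intro i
    simp only [Finset.mem_product, Finset.mem_univ, true_and, Set.Finite.mem_toFinset,
      Set.mem_ofPred_eq]
    have := (hh i).trans (hR (σ i))
    unfold wordDist at this
    exact_mod_cast this
  have hcard : (Finset.univ : Finset (Fin k)).card ≤
      ((Finset.univ : Finset (Fin l)) ×ˢ hB.toFinset).card := by
    refine Finset.card_le_card_of_injOn (fun i => (σ i, (α (2 * D))⁻¹ * (g i * (h i : G))))
      (fun i _ => by exact_mod_cast hmem i) ?_
    intro i _ j _ hij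
    by_contra hne
    apply hdist i j hne
    simp only [Prod.mk.injEq, mul_right_inj] at hij
    obtain ⟨hσ, hgh⟩ := hij
    have hi : g i • (H (σ i) : Set G) = (g i * (h i : G)) • (H (σ i) : Set G) := by
      rw [mul_smul, smul_coe_set (h i).2]
    have hj : g j • (H (σ j) : Set G) = (g j * (h j : G)) • (H (σ j) : Set G) := by
      rw [mul_smul, smul_coe_set (h j).2]
    rw [hi, hj, hgh, hσ]
  rw [Finset.card_product, Finset.card_univ, Finset.card_univ, Fintype.card_fin,
    Fintype.card_fin] at hcard
  omega
end

section
/- Let G be a group generated by a finite set S and let 𝓗 = {H_1,…,H_l} be a finite collection of stable subgroups of G. Then 𝓗 has bounded packing in G. -/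
open Pointwise

section HellyAbstract

/-- Basic properties of an integer-valued geodesic metric. -/
structure GeodDist {α : Type*} (d : α → α → ℝ) : Prop where
  symm : ∀ x y, d x y = d y x
  tri : ∀ x y z, d x z ≤ d x y + d y z
  self : ∀ x, d x x = 0
  int : ∀ x y, ∃ n : ℕ, d x y = n
  geod : ∀ x y, ∃ (n : ℕ) (γ : ℕ → α), γ 0 = x ∧ γ n = y ∧ IsGeodesic d n γ

/-- A uniformly stable subspace, parametrized by `e : X → α`. -/
structure GoodSub {α : Type*} (d : α → α → ℝ) (f : ℝ → ℝ → ℝ) (μ c : ℝ)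
    {X : Type*} (dX : X → X → ℝ) (e : X → α) : Prop where
  geo : GeodDist dX
  lower : ∀ u v, dX u v ≤ μ * (d (e u) (e v) + c)
  upper : ∀ u v, d (e u) (e v) ≤ μ * dX u v + c
  stab : ∀ (n : ℕ) (γ : ℕ → X), IsGeodesic dX n γ → IsStablePath d f n (fun i => e (γ i))

theorem GeodDist.nonneg {α : Type*} {d : α → α → ℝ} (h : GeodDist d) (x y : α) : 0 ≤ d x y := by
  obtain ⟨n, hn⟩ := h.int x y
  rw [hn]; positivity

theorem GeodDist.exists_nearest {α : Type*} {d : α → α → ℝ} (h : GeodDist d) {X : Type*}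
    [Nonempty X] (e : X → α) (x : α) : ∃ m : X, ∀ a : X, d x (e m) ≤ d x (e a) := by
  choose D hD using h.int
  refine ⟨Function.argmin (fun a => D x (e a)), fun a => ?_⟩
  rw [hD, hD]
  exact_mod_cast Function.argmin_le (fun a => D x (e a)) a

/-- Quasigeodesic from one-sided data. -/
theorem isQuasigeodesic_of_le {α : Type*} {d : α → α → ℝ} (hd : GeodDist d) {K ε : ℝ} (hK : 1 ≤ K)
    (hε : 0 ≤ ε)
    {n : ℕ} {γ : ℕ → α} (h : ∀ i j : ℕ, i < j → j ≤ n →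
      ((j : ℝ) - i) ≤ K * (d (γ i) (γ j) + ε) ∧ d (γ i) (γ j) ≤ K * ((j : ℝ) - i) + ε) :
    IsQuasigeodesic d K ε n γ := by
  have key : ∀ i j : ℕ, i < j → j ≤ n →
      (1 / K) * |(i : ℝ) - (j : ℝ)| - ε ≤ d (γ i) (γ j) ∧
      d (γ i) (γ j) ≤ K * |(i : ℝ) - (j : ℝ)| + ε := by
    intro i j hij hj
    obtain ⟨h1, h2⟩ := h i j hij hj
    have hij' : (i : ℝ) < j := by exact_mod_cast hij
    rw [abs_of_nonpos (by linarith), neg_sub]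
    refine ⟨?_, h2⟩
    have : (1 / K) * ((j : ℝ) - i) ≤ d (γ i) (γ j) + ε := by
      rw [one_div, inv_mul_le_iff₀ (by linarith)]; exact h1
    linarith
  intro i j hi hj
  rcases lt_trichotomy i j with hij | hij | hij
  · exact key i j hij hj
  · subst hij
    simp [hd.self, hε]
  · rw [hd.symm, abs_sub_comm]
    exact key j i hij hi

theorem IsQuasigeodesic.lower' {α : Type*} {d : α → α → ℝ} {K ε : ℝ} (hK : 1 ≤ K)
    {n : ℕ} {γ : ℕ → α} (h : IsQuasigeodesic d K ε n γ) {i j : ℕ} (hi : i ≤ n) (hj : j ≤ n) :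
    ((j : ℝ) - i) ≤ K * (d (γ i) (γ j) + ε) := by
  have h1 := (h i j hi hj).1
  have h2 : (1 / K) * |(i : ℝ) - (j : ℝ)| ≤ d (γ i) (γ j) + ε := by linarith
  rw [one_div, inv_mul_le_iff₀ (by linarith)] at h2
  have := neg_abs_le ((i : ℝ) - j)
  linarith

theorem quasi_near {α : Type*} {d : α → α → ℝ} (hd : GeodDist d) {f : ℝ → ℝ → ℝ} {K ε E : ℝ}
    (hK : 1 ≤ K) (hε : 0 ≤ ε) (hE : 0 ≤ E) {L : ℕ} {η : ℕ → α}
    (hη : IsQuasigeodesic d K ε L η) {n : ℕ} {γ : ℕ → α} (hγ : IsStablePath d f n γ)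
    (h0 : d (γ 0) (η 0) ≤ E) (h1 : d (γ n) (η L) ≤ E) :
    ∀ k ≤ L, ∃ i ≤ n, d (η k) (γ i) ≤ f K (ε + 2 * E + 2) := by
  intro k hk
  set η' : ℕ → α := fun i => if i = 0 then γ 0 else if i = L + 2 then γ n else η (i - 1) with hη'
  have hclose : ∀ i ≤ L + 2, d (η' i) (η (min (i - 1) L)) ≤ E := by
    intro i hi
    by_cases hi0 : i = 0
    · subst hi0; simpa [hη'] using h0
    by_cases hi2 : i = L + 2
    · subst hi2; simpa [hη'] using h1
    · have : min (i - 1) L = i - 1 := by omega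
      simp [hη', hi0, hi2, this, hd.self, hE]
  have hq : IsQuasigeodesic d K (ε + 2 * E + 2) (L + 2) η' := by
    apply isQuasigeodesic_of_le hd hK (by linarith)
    intro i j hij hj
    have hi : i ≤ L + 2 := by omega
    have a1 := hclose i hi
    have a2 := hclose j hj
    set p := min (i - 1) L with hp
    set q := min (j - 1) L with hq
    have hpL : p ≤ L := by omega
    have hqL : q ≤ L := by omega
    have hpq : (p : ℝ) ≤ q := by exact_mod_cast (show p ≤ q by omega)
    have hpq1 : (q : ℝ) + i ≤ j + p := by exact_mod_cast (show q + i ≤ j + p by omega)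
    have hpq2 : (j : ℝ) + p ≤ q + i + 2 := by exact_mod_cast (show j + p ≤ q + i + 2 by omega)
    have b1 := hη.lower' hK hpL hqL
    have b2 := (hη p q hpL hqL).2
    rw [abs_sub_comm, abs_of_nonneg (by linarith)] at b2
    have t1 := hd.tri (η' i) (η p) (η' j)
    have t2 := hd.tri (η p) (η q) (η' j)
    have t3 := hd.tri (η p) (η' i) (η q)
    have t4 := hd.tri (η' i) (η' j) (η q)
    rw [hd.symm (η q) (η' j)] at t2
    rw [hd.symm (η p) (η' i)] at t3
    constructor
    · have : d (η p) (η q) + ε ≤ d (η' i) (η' j) + (ε + 2 * E) := by linarith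
      have := mul_le_mul_of_nonneg_left this (by linarith : (0 : ℝ) ≤ K)
      nlinarith
    · have : K * ((q : ℝ) - p) ≤ K * ((j : ℝ) - i) :=
        mul_le_mul_of_nonneg_left (by linarith) (by linarith)
      linarith
  have := hγ K (ε + 2 * E + 2) hK (by linarith) (L + 2) η' hq ⟨0, by omega, by simp [hη']⟩
    ⟨n, le_rfl, by simp [hη']⟩ (k + 1) (by omega)
  have hk' : η' (k + 1) = η k := by
    have : k + 1 ≠ L + 2 := by omega
    simp [hη']; omega
  rwa [hk'] at this

theorem GoodSub.quasi {α : Type*} {d : α → α → ℝ} (hd : GeodDist d) {f : ℝ → ℝ → ℝ} {μ c : ℝ}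
    (hμ : 1 ≤ μ) (hc : 0 ≤ c) {X : Type*} {dX : X → X → ℝ} {e : X → α}
    (h : GoodSub d f μ c dX e) {n : ℕ} {γ : ℕ → X} (hγ : IsGeodesic dX n γ) :
    IsQuasigeodesic d μ c n (fun i => e (γ i)) := by
  apply isQuasigeodesic_of_le hd hμ hc
  intro i j hij hj
  have h1 := h.lower (γ i) (γ j)
  have h2 := h.upper (γ i) (γ j)
  have hij' : (i : ℝ) < j := by exact_mod_cast hij
  rw [hγ i j (by omega) hj, abs_sub_comm, abs_of_nonneg (by linarith)] at h1 h2
  exact ⟨h1, h2⟩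

theorem GoodSub.proj_path {α : Type*} {d : α → α → ℝ} (hd : GeodDist d) {f : ℝ → ℝ → ℝ} {μ c : ℝ}
    (hμ : 1 ≤ μ) (hc : 0 ≤ c) {X : Type*} {dX : X → X → ℝ} {e : X → α}
    (h : GoodSub d f μ c dX e) (x : α) (m y : X) (hm : ∀ a, d x (e m) ≤ d x (e a)) :
    ∃ (L : ℕ) (η : ℕ → α), η 0 = x ∧ η L = e y ∧ (∃ k ≤ L, η k = e m) ∧
      IsQuasigeodesic d (3 * μ) c L η := by
  obtain ⟨n1, ξ, hξ0, hξn, hξ⟩ := hd.geod x (e m)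
  obtain ⟨n2, γ, hγ0, hγn, hγ⟩ := h.geo.geod m y
  have hq := h.quasi hd hμ hc hγ
  set η : ℕ → α := fun k => if k ≤ n1 then ξ k else e (γ (k - n1)) with hη
  refine ⟨n1 + n2, η, by simp [hη, hξ0], ?_, ⟨n1, by omega, by simp [hη, hξn]⟩, ?_⟩
  · rcases Nat.eq_zero_or_pos n2 with h0 | h0
    · subst h0
      simp [hη, hξn, ← hγ0, ← hγn]
    · have : ¬ (n1 + n2 ≤ n1) := by omega
      simp only [hη, if_neg this, Nat.add_sub_cancel_left, hγn]
  apply isQuasigeodesic_of_le hd (by linarith) hc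
  intro i j hij hj
  have hij' : (i : ℝ) < j := by exact_mod_cast hij
  have hdn := hd.nonneg (η i) (η j)
  have hμc : 0 ≤ μ * c := by positivity
  have hμd : 0 ≤ (μ - 1) * d (η i) (η j) := mul_nonneg (by linarith) hdn
  have hμij : 0 ≤ (μ - 1) * ((j : ℝ) - i) := mul_nonneg (by linarith) (by linarith)
  by_cases hj1 : j ≤ n1
  · have hi1 : i ≤ n1 := by omega
    have := hξ i j hi1 hj1
    have e1 : η i = ξ i := by simp [hη, hi1]
    have e2 : η j = ξ j := by simp [hη, hj1]
    rw [abs_sub_comm, abs_of_nonneg (by linarith), ← e1, ← e2] at this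
    constructor <;> nlinarith
  have e2 : η j = e (γ (j - n1)) := by simp [hη, hj1]
  have hcast : ((j - n1 : ℕ) : ℝ) = (j : ℝ) - n1 := by
    rw [Nat.cast_sub (by omega)]
  by_cases hi1 : i ≤ n1
  · have e1 : η i = ξ i := by simp [hη, hi1]
    have hi1' : (i : ℝ) ≤ n1 := by exact_mod_cast hi1
    have hj1' : (n1 : ℝ) < j := by exact_mod_cast (show n1 < j by omega)
    have a1 := hξ 0 i (by omega) hi1
    have a2 := hξ i n1 hi1 le_rfl
    have a3 := hξ 0 n1 (by omega) le_rfl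
    rw [abs_sub_comm, abs_of_nonneg (by push_cast; linarith)] at a1 a2 a3
    rw [hξ0] at a1 a3
    rw [hξn] at a2 a3
    rw [← e1] at a1 a2
    have b1 := hm (γ (j - n1))
    rw [← e2] at b1
    have c1 := hq.lower' hμ (i := 0) (j := j - n1) (by omega) (by omega)
    have c2 := (hq 0 (j - n1) (by omega) (by omega)).2
    rw [abs_sub_comm, abs_of_nonneg (by rw [hcast]; push_cast; linarith)] at c2
    simp only [hγ0, ← e2, hcast] at c1 c2
    push_cast at c1 c2 a1 a3
    have t1 := hd.tri x (η i) (η j)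
    have t2 := hd.tri (e m) (η i) (η j)
    have t3 := hd.tri (η i) (e m) (η j)
    rw [hd.symm (e m) (η i)] at t2
    have u1 : d (e m) (η j) ≤ 2 * d (η i) (η j) := by linarith
    have u2 : μ * (d (e m) (η j) + c) ≤ μ * (2 * d (η i) (η j) + c) :=
      mul_le_mul_of_nonneg_left (by linarith) (by linarith)
    have u3 : 0 ≤ (μ - 1) * ((n1 : ℝ) - i) := mul_nonneg (by linarith) (by linarith)
    constructor
    · nlinarith
    · nlinarith
  · have e1 : η i = e (γ (i - n1)) := by simp [hη, hi1]
    have hcast' : ((i - n1 : ℕ) : ℝ) = (i : ℝ) - n1 := by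
      rw [Nat.cast_sub (by omega)]
    have c1 := hq.lower' hμ (i := i - n1) (j := j - n1) (by omega) (by omega)
    have c2 := (hq (i - n1) (j - n1) (by omega) (by omega)).2
    rw [abs_sub_comm, abs_of_nonneg (by rw [hcast, hcast']; linarith)] at c2
    simp only [← e1, ← e2, hcast, hcast'] at c1 c2
    constructor <;> nlinarith

/-- Nearest point projections to one good subspace stay close to good paths of another. -/
theorem proj_near {α : Type*} {d : α → α → ℝ} (hd : GeodDist d) {f : ℝ → ℝ → ℝ} {μ c E : ℝ}
    (hμ : 1 ≤ μ) (hc : 0 ≤ c) (hE : 0 ≤ E) {X : Type*} {dX : X → X → ℝ} {e : X → α}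
    (h : GoodSub d f μ c dX e) {x : α} {m y : X} (hm : ∀ a, d x (e m) ≤ d x (e a))
    {n : ℕ} {γ : ℕ → α} (hγ : IsStablePath d f n γ)
    (h0 : d (γ 0) x ≤ E) (h1 : d (γ n) (e y) ≤ E) :
    ∃ i ≤ n, d (e m) (γ i) ≤ f (3 * μ) (c + 2 * E + 2) := by
  obtain ⟨L, η, hη0, hηL, ⟨k, hk, hkm⟩, hq⟩ := h.proj_path hd hμ hc x m y hm
  rw [← hkm]
  exact quasi_near hd (by linarith) hc hE hq hγ (by rwa [hη0]) (by rwa [hηL]) k hk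

theorem proj_near' {α : Type*} {d : α → α → ℝ} (hd : GeodDist d) {f : ℝ → ℝ → ℝ} {μ c E : ℝ}
    (hμ : 1 ≤ μ) (hc : 0 ≤ c) (hE : 0 ≤ E) {X : Type*} {dX : X → X → ℝ} {e : X → α}
    (h : GoodSub d f μ c dX e) {x : α} {m y : X} (hm : ∀ a, d x (e m) ≤ d x (e a))
    {Y : Type*} {dY : Y → Y → ℝ} {e' : Y → α} (h' : GoodSub d f μ c dY e') {p q : Y}
    (h0 : d (e' p) x ≤ E) (h1 : d (e' q) (e y) ≤ E) :
    ∃ b : Y, d (e m) (e' b) ≤ f (3 * μ) (c + 2 * E + 2) := by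
  obtain ⟨n, γ, hγ0, hγn, hγ⟩ := h'.geo.geod p q
  obtain ⟨i, -, hi⟩ := proj_near hd hμ hc hE h hm (h'.stab n γ hγ) (by rwa [hγ0])
    (by rwa [hγn])
  exact ⟨_, hi⟩

/-- Helly property for finitely many pairwise close good subspaces. -/
theorem helly_good {α : Type*} {d : α → α → ℝ} (hd : GeodDist d) {f : ℝ → ℝ → ℝ} {μ c D : ℝ}
    (hμ : 1 ≤ μ) (hc : 0 ≤ c) (hD : 0 ≤ D) (hf : ∀ a b, 0 ≤ f a b) :
    ∃ R : ℝ, ∀ {ι : Type} [Finite ι] [Nonempty ι] (X : ι → Type*) (dX : ∀ i, X i → X i → ℝ)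
      (e : ∀ i, X i → α), (∀ i, GoodSub d f μ c (dX i) (e i)) →
      (∀ i j, ∃ (u : X i) (v : X j), d (e i u) (e j v) ≤ D) →
      ∃ w : α, ∀ i, ∃ u : X i, d w (e i u) ≤ R := by
  obtain ⟨F, hF⟩ : ∃ F : ℝ → ℝ, F = fun E => f (3 * μ) (c + 2 * E + 2) := ⟨_, rfl⟩
  have hF0 : ∀ E, 0 ≤ F E := fun E => by rw [hF]; exact hf _ _
  set D1 := F D with hD1
  set D2 := F D1 with hD2
  have hD1' : 0 ≤ D1 := hF0 _
  have hD2' : 0 ≤ D2 := hF0 _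
  set M := 2 * (μ * (D1 + D2 + c)) with hM
  have hM0 : 0 ≤ M := by positivity
  refine ⟨D2 + (μ * M + c) + D2 + F (D1 + D2), ?_⟩
  intro ι _ _ X dX e hg hclose
  obtain ⟨o⟩ := ‹Nonempty ι›
  haveI hne : ∀ i, Nonempty (X i) := fun i => let ⟨u, _⟩ := hclose i i; ⟨u⟩
  obtain ⟨z⟩ := hne o
  -- nearest points of `z`
  choose a ha using fun i => hd.exists_nearest (e i) (e o z)
  have hb : ∀ i, ∃ b : X o, d (e i (a i)) (e o b) ≤ D1 := by
    intro i
    obtain ⟨u, v, huv⟩ := hclose o i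
    have := proj_near' hd hμ hc hD (hg i) (ha i) (hg o) (p := z) (q := u) (y := v)
      (by rw [hd.self]; exact hD) huv
    rw [hD1, hF]; exact this
  choose b hb using hb
  -- triple intersections
  have hp : ∀ i j, ∃ p : X o, (∃ u : X i, d (e o p) (e i u) ≤ D1) ∧
      (∃ u : X j, d (e o p) (e j u) ≤ D1) := by
    intro i j
    obtain ⟨u, v, huv⟩ := hclose i j
    obtain ⟨p, hp⟩ := hd.exists_nearest (e o) (e i u)
    obtain ⟨u1, v1, h1⟩ := hclose i o
    obtain ⟨u2, v2, h2⟩ := hclose j o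
    refine ⟨p, ?_, ?_⟩
    · rw [hD1, hF]
      exact proj_near' hd hμ hc hD (hg o) hp (hg i) (p := u) (by rw [hd.self]; exact hD) h1
    · rw [hD1, hF]
      exact proj_near' hd hμ hc hD (hg o) hp (hg j) (p := v) (by rw [hd.symm]; exact huv) h2
  obtain ⟨k, hk⟩ := Finite.exists_max (fun i => dX o z (b i))
  refine ⟨e k (a k), fun j => ?_⟩
  obtain ⟨p, ⟨u, hu⟩, ⟨v, hv⟩⟩ := hp k j
  obtain ⟨n, γ, hγ0, hγn, hγ⟩ := (hg o).geo.geod z p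
  have hst := (hg o).stab n γ hγ
  obtain ⟨s, hsn, hs⟩ : ∃ s ≤ n, d (e k (a k)) (e o (γ s)) ≤ D2 := by
    rw [hD2, hF]
    exact proj_near hd hμ hc hD1' (hg k) (ha k) hst (by rw [hγ0, hd.self]; exact hD1')
      (by rw [hγn]; exact hu)
  obtain ⟨t, htn, ht⟩ : ∃ s ≤ n, d (e j (a j)) (e o (γ s)) ≤ D2 := by
    rw [hD2, hF]
    exact proj_near hd hμ hc hD1' (hg j) (ha j) hst (by rw [hγ0, hd.self]; exact hD1')
      (by rw [hγn]; exact hv)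
  have hbγ : ∀ (i : ι) (r : ℕ), r ≤ n → d (e i (a i)) (e o (γ r)) ≤ D2 →
      dX o (b i) (γ r) ≤ μ * (D1 + D2 + c) ∧ dX o z (γ r) = r := by
    intro i r hr h
    have h1 := hd.tri (e o (b i)) (e i (a i)) (e o (γ r))
    have h2 := hb i
    rw [hd.symm] at h2
    have h3 := (hg o).lower (b i) (γ r)
    refine ⟨h3.trans (mul_le_mul_of_nonneg_left (by linarith) (by linarith)), ?_⟩
    have := hγ 0 r (by omega) hr
    rw [hγ0] at this
    rw [this]; simp
  obtain ⟨s1, s2⟩ := hbγ k s hsn hs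
  obtain ⟨t1, t2⟩ := hbγ j t htn ht
  have hts : (t : ℝ) ≤ s + M := by
    have h1 := (hg o).geo.tri z (b j) (γ t)
    have h2 := (hg o).geo.tri z (γ s) (b k)
    rw [(hg o).geo.symm (γ s)] at h2
    have := hk j
    linarith
  have hq := (hg o).quasi hd hμ hc hγ
  by_cases hst' : t ≤ s
  · -- use the subpath from `t` to `n`
    have hsub : IsQuasigeodesic d (3 * μ) c (n - t) (fun i => e o (γ (t + i))) := by
      apply isQuasigeodesic_of_le hd (by linarith) hc
      intro i j hij hj
      have hij' : (i : ℝ) < j := by exact_mod_cast hij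
      have c1 := hq.lower' hμ (i := t + i) (j := t + j) (by omega) (by omega)
      have c2 := (hq (t + i) (t + j) (by omega) (by omega)).2
      rw [abs_sub_comm, abs_of_nonneg (by push_cast; linarith)] at c2
      push_cast at c1 c2
      have hdn := hd.nonneg (e o (γ (t + i))) (e o (γ (t + j)))
      have x1 : 0 ≤ μ * c := by positivity
      have x2 : 0 ≤ μ * d (e o (γ (t + i))) (e o (γ (t + j))) := by positivity
      have x3 : 0 ≤ μ * ((j : ℝ) - i) := mul_nonneg (by linarith) (by linarith)
      constructor <;> nlinarith
    obtain ⟨n', γ', hγ0', hγn', hγ'⟩ := (hg j).geo.geod (a j) v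
    obtain ⟨i, -, hi⟩ := quasi_near hd (by linarith) hc (by linarith : 0 ≤ D1 + D2) hsub
      ((hg j).stab n' γ' hγ')
      (by rw [hγ0']; simp only [add_zero]; linarith)
      (by rw [hγn', Nat.add_sub_cancel' htn, hγn, hd.symm]; linarith) (s - t) (by omega)
    simp only [Nat.add_sub_cancel' hst'] at hi
    refine ⟨γ' i, ?_⟩
    have h1 := hd.tri (e k (a k)) (e o (γ s)) (e j (γ' i))
    have h2 : d (e o (γ s)) (e j (γ' i)) ≤ F (D1 + D2) := by rw [hF]; exact hi
    have : 0 ≤ μ * M := by positivity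
    linarith
  · refine ⟨a j, ?_⟩
    have hst2 : (s : ℝ) < t := by exact_mod_cast (show s < t by omega)
    have h1 := (hq s t hsn htn).2
    rw [abs_sub_comm, abs_of_nonneg (by linarith)] at h1
    have h2 : μ * ((t : ℝ) - s) ≤ μ * M := mul_le_mul_of_nonneg_left (by linarith) (by linarith)
    have h3 := hd.tri (e k (a k)) (e o (γ s)) (e j (a j))
    have h4 := hd.tri (e o (γ s)) (e o (γ t)) (e j (a j))
    rw [hd.symm (e o (γ t))] at h4
    have := hF0 (D1 + D2)
    simp only at h1
    linarith

end HellyAbstract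

section WordMetric

theorem wordLength_exists {G : Type*} [Group G] {S : Set G} (hS : Subgroup.closure S = ⊤) (g : G) :
    ∃ l : List G, l.length = wordLength S g ∧ (∀ x ∈ l, x ∈ S ∨ x⁻¹ ∈ S) ∧ l.prod = g := by
  have hg : g ∈ Subgroup.closure S := by rw [hS]; trivial
  rw [← Subgroup.mem_toSubmonoid, Subgroup.closure_toSubmonoid] at hg
  obtain ⟨l, h1, h2⟩ := Submonoid.exists_list_of_mem_closure hg
  exact Nat.sInf_mem (s := {n : ℕ | ∃ l : List G, l.length = n ∧ (∀ x ∈ l, x ∈ S ∨ x⁻¹ ∈ S) ∧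
    l.prod = g}) ⟨l.length, l, rfl, h1, h2⟩

theorem wordLength_le {G : Type*} [Group G] {S : Set G} (l : List G)
    (hl : ∀ x ∈ l, x ∈ S ∨ x⁻¹ ∈ S) : wordLength S l.prod ≤ l.length :=
  Nat.sInf_le ⟨l, rfl, hl, rfl⟩

theorem wordLength_mul {G : Type*} [Group G] {S : Set G} (hS : Subgroup.closure S = ⊤) (g h : G) :
    wordLength S (g * h) ≤ wordLength S g + wordLength S h := by
  obtain ⟨l, a1, a2, a3⟩ := wordLength_exists hS g
  obtain ⟨l', b1, b2, b3⟩ := wordLength_exists hS h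
  have := wordLength_le (S := S) (l ++ l') (by
    intro x hx
    rcases List.mem_append.1 hx with h | h
    · exact a2 x h
    · exact b2 x h)
  rwa [List.prod_append, a3, b3, List.length_append, a1, b1] at this

theorem wordLength_inv_le {G : Type*} [Group G] {S : Set G} (hS : Subgroup.closure S = ⊤) (g : G) :
    wordLength S g⁻¹ ≤ wordLength S g := by
  obtain ⟨l, a1, a2, a3⟩ := wordLength_exists hS g
  have := wordLength_le (S := S) (l.map (fun x => x⁻¹)).reverse (by
    intro x hx
    simp only [List.mem_reverse, List.mem_map] at hx
    obtain ⟨y, hy, rfl⟩ := hx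
    rw [inv_inv]
    exact (a2 y hy).symm)
  rwa [← List.prod_inv_reverse, a3, List.length_reverse, List.length_map, a1] at this

theorem wordDist_geodDist {G : Type*} [Group G] {S : Set G} (hS : Subgroup.closure S = ⊤) :
    GeodDist (wordDist S) := by
  have hle : ∀ x y : G, wordDist S x y ≤ wordDist S y x := by
    intro x y
    have := wordLength_inv_le hS (y⁻¹ * x)
    simp only [mul_inv_rev, inv_inv] at this
    unfold wordDist
    exact_mod_cast this
  have htri : ∀ x y z : G, wordDist S x z ≤ wordDist S x y + wordDist S y z := by
    intro x y z
    have := wordLength_mul hS (x⁻¹ * y) (y⁻¹ * z)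
    rw [show x⁻¹ * y * (y⁻¹ * z) = x⁻¹ * z by group] at this
    unfold wordDist
    exact_mod_cast this
  have hself : ∀ x : G, wordDist S x x = 0 := by
    intro x
    have := wordLength_le (S := S) [] (by simp)
    simp only [List.prod_nil, List.length_nil, Nat.le_zero] at this
    simp [wordDist, this]
  have hsymm : ∀ x y : G, wordDist S x y = wordDist S y x :=
    fun x y => le_antisymm (hle x y) (hle y x)
  refine ⟨hsymm, htri, hself, fun x y => ⟨_, rfl⟩, ?_⟩
  intro x y
  obtain ⟨l, a1, a2, a3⟩ := wordLength_exists hS (x⁻¹ * y)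
  have hup : ∀ i j : ℕ, i ≤ j →
      wordDist S (x * (l.take i).prod) (x * (l.take j).prod) ≤ (j : ℝ) - i := by
    intro i j hij
    have e1 : l.take j = l.take i ++ (l.drop i).take (j - i) := by
      rw [← List.take_add, Nat.add_sub_cancel' hij]
    have e2 : (x * (l.take i).prod)⁻¹ * (x * (l.take j).prod) = ((l.drop i).take (j - i)).prod := by
      rw [e1, List.prod_append]; group
    unfold wordDist
    rw [e2, ← Nat.cast_sub hij]
    have := wordLength_le (S := S) ((l.drop i).take (j - i))
      (fun x hx => a2 x (List.mem_of_mem_drop (List.mem_of_mem_take hx)))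
    have h2 : ((l.drop i).take (j - i)).length ≤ j - i := List.length_take_le _ _
    exact_mod_cast this.trans h2
  have h0 : x * (l.take 0).prod = x := by simp
  have hn : x * (l.take (wordLength S (x⁻¹ * y))).prod = y := by
    rw [← a1, List.take_length, a3]; group
  have key : ∀ i j : ℕ, i ≤ j → j ≤ wordLength S (x⁻¹ * y) →
      wordDist S (x * (l.take i).prod) (x * (l.take j).prod) = (j : ℝ) - i := by
    intro i j hij hj
    apply le_antisymm (hup i j hij)
    have h1 := hup 0 i (by omega)
    have h2 := hup j _ hj
    rw [h0] at h1
    rw [hn] at h2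
    have t1 := htri x (x * (l.take i).prod) y
    have t2 := htri (x * (l.take i).prod) (x * (l.take j).prod) y
    have : wordDist S x y = wordLength S (x⁻¹ * y) := rfl
    push_cast at h1
    linarith
  refine ⟨wordLength S (x⁻¹ * y), fun i => x * (l.take i).prod, h0, hn, ?_⟩
  intro i j hi hj
  rcases le_total i j with hij | hij
  · have : (i : ℝ) ≤ j := by exact_mod_cast hij
    rw [key i j hij hj, abs_sub_comm, abs_of_nonneg (by linarith)]
  · have : (j : ℝ) ≤ i := by exact_mod_cast hij
    rw [hsymm, key j i hij hi, abs_of_nonneg (by linarith)]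

theorem wordDist_mul_left {G : Type*} [Group G] (S : Set G) (g x y : G) :
    wordDist S (g * x) (g * y) = wordDist S x y := by
  unfold wordDist
  congr 2
  group

theorem finite_ball {G : Type*} [Group G] {S : Set G} (hfin : S.Finite)
    (hS : Subgroup.closure S = ⊤) (R : ℝ) : {g : G | (wordLength S g : ℝ) ≤ R}.Finite := by
  have hU : (S ∪ S⁻¹).Finite := hfin.union hfin.inv
  have := hU.to_subtype
  have h2 : {l : List (S ∪ S⁻¹ : Set G) | l.length ≤ ⌊R⌋₊}.Finite := List.finite_length_le _ _
  refine (h2.image (fun l => (l.map Subtype.val).prod)).subset ?_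
  intro g hg
  obtain ⟨l, a1, a2, a3⟩ := wordLength_exists hS g
  have hmem : ∀ x ∈ l, x ∈ S ∪ S⁻¹ := fun x hx => a2 x hx
  lift l to List (S ∪ S⁻¹ : Set G) using hmem
  refine ⟨l, ?_, a3⟩
  have : l.length = wordLength S g := by simpa using a1
  simp only [Set.mem_setOf_eq, this]
  exact Nat.le_floor hg

theorem IsStablePath.translate {G : Type*} [Group G] {S : Set G} {f f' : ℝ → ℝ → ℝ}
    (hff : ∀ a b, f a b ≤ f' a b) {n : ℕ}
    {γ : ℕ → G} (h : IsStablePath (wordDist S) f n γ) (g : G) :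
    IsStablePath (wordDist S) f' n (fun i => g * γ i) := by
  intro K ε hK hε m η hη h0 h1 j hj
  obtain ⟨i0, hi0, e0⟩ := h0
  obtain ⟨i1, hi1, e1⟩ := h1
  obtain ⟨i, hi, hd⟩ := h K ε hK hε m (fun k => g⁻¹ * η k)
    (by
      intro a b ha hb
      have := hη a b ha hb
      simpa only [wordDist_mul_left] using this)
    ⟨i0, hi0, by simp [e0]⟩ ⟨i1, hi1, by simp [e1]⟩ j hj
  refine ⟨i, hi, le_trans ?_ (hff K ε)⟩
  rw [← wordDist_mul_left S g⁻¹]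
  simpa using hd

end WordMetric

/-- **Bounded packing for a finite collection of stable subgroups.** -/
theorem bounded_packing_of_stable_family {G : Type*} [Group G] (S : Set G) (hSfin : S.Finite)
    (hSgen : Subgroup.closure S = ⊤) (l : ℕ) (H : Fin l → Subgroup G)
    (hstable : ∀ i, IsStableSubgroup S (H i)) :
    ∀ D : ℝ, 0 ≤ D → ∃ N : ℕ, ∀ (σ : Fin N → Fin l) (g : Fin N → G),
      (∀ i j : Fin N, i ≠ j → g i • (H (σ i) : Set G) ≠ g j • (H (σ j) : Set G)) →
      ∃ i j : Fin N, i ≠ j ∧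
        D ≤ setDist S (g i • (H (σ i) : Set G)) (g j • (H (σ j) : Set G)) := by
  classical
  intro D hD
  choose f hf using hstable
  choose T hTfin hTgen hqi hst using hf
  choose μ c hμ hc hqi using hqi
  have hd := wordDist_geodDist hSgen
  set f' : ℝ → ℝ → ℝ := fun a b => ∑ i, |f i a b| with hf'
  have hμ0 : ∀ i, 0 ≤ μ i := fun i => by linarith [hμ i]
  set μ' : ℝ := 1 + ∑ i, μ i with hμ'
  set c' : ℝ := ∑ i, c i with hc'
  have hff : ∀ i a b, f i a b ≤ f' a b := fun i a b => (le_abs_self _).trans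
    (Finset.single_le_sum (f := fun i => |f i a b|) (fun _ _ => abs_nonneg _) (Finset.mem_univ i))
  have hμμ : ∀ i, μ i ≤ μ' := fun i => by
    have := Finset.single_le_sum (f := μ) (fun i _ => hμ0 i) (Finset.mem_univ i)
    linarith
  have hcc : ∀ i, c i ≤ c' := fun i =>
    Finset.single_le_sum (f := c) (fun i _ => hc i) (Finset.mem_univ i)
  have hμ1 : 1 ≤ μ' := by
    have := Finset.sum_nonneg (s := Finset.univ) (f := μ) (fun i _ => hμ0 i)
    linarith
  have hc0 : 0 ≤ c' := Finset.sum_nonneg (fun i _ => hc i)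
  have hgood : ∀ (i : Fin l) (g : G),
      GoodSub (wordDist S) f' μ' c' (wordDist (T i)) (fun h : H i => g * (h : G)) := by
    intro i g
    have hdT := wordDist_geodDist (hTgen i)
    refine ⟨hdT, ?_, ?_, ?_⟩
    · intro u v
      rw [wordDist_mul_left]
      have h1 := (hqi i u v).1
      have h2 : (1 / μ i) * wordDist (T i) u v ≤ wordDist S (u : G) v + c i := by linarith
      rw [one_div, inv_mul_le_iff₀ (by linarith [hμ i])] at h2
      refine h2.trans (mul_le_mul (hμμ i) (by linarith [hcc i]) ?_ (by linarith))
      have := hd.nonneg (u : G) v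
      linarith [hc i]
    · intro u v
      rw [wordDist_mul_left]
      have h1 := (hqi i u v).2
      have := mul_le_mul_of_nonneg_right (hμμ i) (hdT.nonneg u v)
      linarith [hcc i]
    · intro n γ hγ
      exact (hst i n γ hγ).2.translate (hff i) g
  obtain ⟨R, hR⟩ := helly_good hd hμ1 hc0 hD (f := f')
    (fun a b => Finset.sum_nonneg fun _ _ => abs_nonneg _)
  have hball := finite_ball hSfin hSgen R
  haveI := hball.fintype
  refine ⟨Fintype.card (Fin l × {g : G | (wordLength S g : ℝ) ≤ R}) + 1, ?_⟩
  intro σ g hne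
  by_contra! hcon
  obtain ⟨w, hw⟩ := hR (fun i => H (σ i)) (fun i => wordDist (T (σ i)))
    (fun i (h : H (σ i)) => g i * (h : G)) (fun i => hgood _ _) (by
      intro i j
      by_cases hij : i = j
      · subst hij
        exact ⟨1, 1, by rw [hd.self]; exact hD⟩
      have h1 := hcon i j hij
      unfold setDist at h1
      obtain ⟨r, ⟨a, ⟨u, hu, rfl⟩, b, ⟨v, hv, rfl⟩, rfl⟩, hr⟩ := exists_lt_of_csInf_lt
        (by
          exact ⟨_, g i • 1, Set.smul_mem_smul_set (H (σ i)).one_mem, g j • 1,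
            Set.smul_mem_smul_set (H (σ j)).one_mem, rfl⟩) h1
      exact ⟨⟨u, hu⟩, ⟨v, hv⟩, hr.le⟩)
  choose u hu using hw
  obtain ⟨i, j, hij, heq⟩ := Fintype.exists_ne_map_eq_of_card_lt
    (fun i => ((σ i, ⟨w⁻¹ * (g i * (u i : G)), hu i⟩) :
      Fin l × {g : G | (wordLength S g : ℝ) ≤ R})) (by simp)
  obtain ⟨h1, h2⟩ := Prod.mk.inj heq
  replace h2 := mul_left_cancel (congrArg Subtype.val h2)
  apply hne i j hij
  have e1 : ∀ k, g k • (H (σ k) : Set G) = (g k * (u k : G)) • (H (σ k) : Set G) := by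
    intro k
    rw [mul_smul, smul_coe_set (u k).2]
  rw [e1 i, e1 j, h2, h1]
end
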